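/- Let R → S be a homomorphism of associative rings, A the abelian category of triples (N, M, f : N → M) with N a left S-module, M a left R-module, f an R-linear map, and E = (S, 0, 0). Then Ext^i_A(E, L) ≅ Ext^{i-1}_R(S, M) for all i ≥ 2 and all L = (N, M, f) ∈ A, where S is viewed as a left R-module via the ring homomorphism. -/

import Mathlib

open CategoryTheory CategoryTheory.Limits

universe u

variable {R S : Type u} [Ring R] [Ring S] (φ : R →+* S)

/-- The abelian category `A` of triples `(N, M, f)` with `N` a left `S`-module, `M` a left
`R`-module and `f : N → M` an `R`-module morphism, realized as a comma category. -/
abbrev TripleCat := Comma (ModuleCat.restrictScalars.{u} φ) (𝟭 (ModuleCat.{u} R))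

/-- The object `E = (S, 0, 0)`. -/
noncomputable def Eobj : TripleCat φ where
  left := ModuleCat.of S S
  right := ModuleCat.of R PUnit
  hom := 0

namespace CategoryTheory

open Abelian

section ExtAdjunction

universe w w' v v' u₁ u₂

variable {C : Type u₁} [Category.{v} C] [Abelian C] {D : Type u₂} [Category.{v'} D] [Abelian D]

/-- An additive right exact functor which preserves monomorphisms preserves short exact
sequences. -/
lemma ShortComplex.ShortExact.map_of_preservesMonomorphisms {T : ShortComplex C}
    (hT : T.ShortExact) (F : C ⥤ D) [F.Additive] [PreservesFiniteColimits F]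
    [F.PreservesMonomorphisms] : (T.map F).ShortExact := by
  have hF : ∀ T : ShortComplex C, T.ShortExact → (T.map F).Exact ∧ Epi (F.map T.g) :=
    ((Functor.preservesFiniteColimits_tfae F).out 0 3).2 ‹_›
  obtain ⟨hex, hepi⟩ := hF T hT
  have := hT.mono_f
  exact { exact := hex, mono_f := inferInstanceAs (Mono (F.map T.f)), epi_g := hepi }

variable [HasExt.{w} C] [HasExt.{w'} D]

/-- For a short exact sequence with projective middle term, the connecting homomorphism between
`Ext` groups is an isomorphism in positive degrees. -/
noncomputable def ShortComplex.ShortExact.extAddEquivOfProjective {T : ShortComplex C}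
    (hT : T.ShortExact) [Projective T.X₂] (Y : C) (n : ℕ) :
    Ext.{w} T.X₁ Y (n + 1) ≃+ Ext.{w} T.X₃ Y (n + 2) :=
  AddEquiv.ofBijective (hT.extClass.precomp Y (by lia : 1 + (n + 1) = n + 2)) <| by
    have := Ext.subsingleton_of_projective.{w} T.X₂ Y n
    have := Ext.subsingleton_of_projective.{w} T.X₂ Y (n + 1)
    refine ⟨(injective_iff_map_eq_zero _).2 fun x hx ↦ ?_, fun y ↦
      Ext.contravariant_sequence_exact₃ hT Y y (Subsingleton.elim _ _) (by lia)⟩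
    obtain ⟨z, rfl⟩ := Ext.contravariant_sequence_exact₁ hT Y x (by lia) hx
    rw [Subsingleton.elim z 0, Ext.comp_zero]

namespace Adjunction

variable {F : C ⥤ D} {G : D ⥤ C} [F.Additive] [PreservesFiniteLimits F]
  [PreservesFiniteColimits F]

/-- The map between `Ext` groups induced by an adjunction whose right adjoint is exact. -/
noncomputable def extAddHom (adj : G ⊣ F) (X : D) (Y : C) (n : ℕ) :
    Ext.{w} (G.obj X) Y n →+ Ext.{w'} X (F.obj Y) n :=
  ((Ext.mk₀ (adj.unit.app X)).precomp (F.obj Y) (zero_add n)).comp (F.mapExtAddHom (G.obj X) Y n)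

lemma extAddHom_apply (adj : G ⊣ F) {X : D} {Y : C} {n : ℕ} (e : Ext.{w} (G.obj X) Y n) :
    adj.extAddHom.{w, w'} X Y n e =
      (Ext.mk₀ (adj.unit.app X)).comp (e.mapExactFunctor F) (zero_add n) :=
  rfl

lemma extAddHom_mk₀_comp (adj : G ⊣ F) {X X' : D} (f : X ⟶ X') {Y : C} {n : ℕ}
    (e : Ext.{w} (G.obj X') Y n) :
    adj.extAddHom.{w, w'} X Y n ((Ext.mk₀ (G.map f)).comp e (zero_add n)) =
      (Ext.mk₀ f).comp (adj.extAddHom.{w, w'} X' Y n e) (zero_add n) := by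
  simp only [extAddHom_apply, Ext.mapExactFunctor_comp, Ext.mapExactFunctor_mk₀,
    Ext.mk₀_comp_mk₀_assoc]
  congr 2
  exact (adj.unit.naturality f).symm

lemma extAddHom_extClass_comp (adj : G ⊣ F) {T : ShortComplex D} [G.Additive]
    (hT : T.ShortExact) (hGT : (T.map G).ShortExact) {Y : C} {n : ℕ}
    (e : Ext.{w} (T.map G).X₁ Y n) {m : ℕ} (h : 1 + n = m) :
    adj.extAddHom.{w, w'} T.X₃ Y m (hGT.extClass.comp e h) =
      hT.extClass.comp (adj.extAddHom.{w, w'} T.X₁ Y n e) h := by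
  let τ : T ⟶ (T.map G).map F :=
    { τ₁ := adj.unit.app T.X₁
      τ₂ := adj.unit.app T.X₂
      τ₃ := adj.unit.app T.X₃
      comm₁₂ := (adj.unit.naturality T.f).symm
      comm₂₃ := (adj.unit.naturality T.g).symm }
  have key := ShortComplex.ShortExact.extClass_naturality hT (hGT.map_of_exact F) τ
  have hF : (hGT.extClass.comp e h).mapExactFunctor F =
      (hGT.map_of_exact F).extClass.comp (e.mapExactFunctor F) h := by
    exact (Ext.mapExactFunctor_comp F _ _ h).trans
      (congrArg (fun z ↦ Ext.comp z (e.mapExactFunctor F) h) (Ext.mapExactFunctor_extClass F hGT))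
  calc
    _ = (Ext.mk₀ τ.τ₃).comp ((hGT.map_of_exact F).extClass.comp (e.mapExactFunctor F) h)
          (zero_add m) := congrArg (fun z ↦ (Ext.mk₀ τ.τ₃).comp z (zero_add m)) hF
    _ = (hT.extClass.comp (Ext.mk₀ τ.τ₁) (add_zero 1)).comp (e.mapExactFunctor F) h :=
      (Ext.comp_assoc _ _ _ (zero_add 1) h (by lia)).symm.trans
        (congrArg (fun z ↦ Ext.comp z (e.mapExactFunctor F) h) key.symm)
    _ = _ := Ext.comp_assoc _ _ _ (add_zero 1) (zero_add n) (by lia)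

/-- For an adjunction between exact functors, the induced map between `Ext` groups is
bijective. -/
lemma extAddHom_bijective (adj : G ⊣ F) [G.Additive] [PreservesFiniteColimits G]
    [G.PreservesMonomorphisms] [EnoughProjectives D] (X : D) (Y : C) (n : ℕ) :
    Function.Bijective (adj.extAddHom.{w, w'} X Y n) := by
  induction n generalizing X with
  | zero =>
    have : ⇑(adj.extAddHom.{w, w'} X Y 0) =
        Ext.homEquiv₀.symm ∘ adj.homEquiv X Y ∘ Ext.homEquiv₀ := by
      ext e
      obtain ⟨f, rfl⟩ := Ext.homEquiv₀.symm.surjective e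
      simp [extAddHom_apply, Ext.homEquiv₀, Ext.mapExactFunctor_mk₀, adj.homEquiv_unit]
    rw [this]
    exact Ext.homEquiv₀.symm.bijective.comp
      ((adj.homEquiv X Y).bijective.comp Ext.homEquiv₀.bijective)
  | succ n hn =>
    let P : ProjectivePresentation X := Classical.arbitrary _
    let T := ShortComplex.mk _ _ (kernel.condition P.f)
    have hT : T.ShortExact := { exact := ShortComplex.exact_kernel P.f }
    have hGT := hT.map_of_preservesMonomorphisms G
    have : Projective T.X₂ := P.projective
    have : Projective (T.map G).X₂ := adj.map_projective _ P.projective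
    have := Ext.subsingleton_of_projective.{w'} T.X₂ (F.obj Y) n
    have := Ext.subsingleton_of_projective.{w} (T.map G).X₂ Y n
    exact AddMonoidHom.bijective_of_surjective_of_bijective_of_right_exact _ _ _ _
      (adj.extAddHom T.X₂ Y n) (adj.extAddHom T.X₁ Y n) (adj.extAddHom T.X₃ Y (n + 1))
      (by ext e; exact (adj.extAddHom_mk₀_comp T.f e).symm)
      (by ext e; exact (adj.extAddHom_extClass_comp hT hGT e (add_comm 1 n)).symm)
      ((ShortComplex.ab_exact_iff_function_exact _).1
        (Ext.contravariant_sequence_exact₁' hGT Y n (n + 1) (add_comm 1 n)))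
      ((ShortComplex.ab_exact_iff_function_exact _).1
        (Ext.contravariant_sequence_exact₁' hT (F.obj Y) n (n + 1) (add_comm 1 n)))
      (hn _).surjective (hn _)
      (fun x ↦ Ext.contravariant_sequence_exact₃ hGT _ x (Subsingleton.elim _ _) (add_comm 1 n))
      (fun y ↦ Ext.contravariant_sequence_exact₃ hT _ y (Subsingleton.elim _ _) (add_comm 1 n))

end Adjunction

end ExtAdjunction

end CategoryTheory

namespace TripleCat

/-- The functor `M ↦ (0, M, 0)`. -/
noncomputable def ofRight : ModuleCat.{u} R ⥤ TripleCat φ where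
  obj M := { left := ModuleCat.of S PUnit, right := M, hom := 0 }
  map f := { left := 𝟙 _, right := f, w := by simp }

/-- The functor `N ↦ (N, N, id)`. -/
noncomputable def diag : ModuleCat.{u} S ⥤ TripleCat φ where
  obj N := { left := N, right := (ModuleCat.restrictScalars φ).obj N, hom := 𝟙 _ }
  map f := { left := f, right := (ModuleCat.restrictScalars φ).map f, w := by simp }

lemma isZero_of_punit (A : Type u) [Ring A] : IsZero (ModuleCat.of A PUnit.{u + 1}) :=
  ModuleCat.isZero_of_subsingleton _

lemma ofRight_hom_eq {M : ModuleCat.{u} R} {L : TripleCat φ} {f g : (ofRight φ).obj M ⟶ L}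
    (h : f.right = g.right) : f = g :=
  Comma.hom_ext _ _ ((isZero_of_punit S).eq_of_src _ _) h

/-- `M ↦ (0, M, 0)` is left adjoint to `(N, M, f) ↦ M`. -/
noncomputable def ofRightAdj : ofRight φ ⊣ Comma.snd (ModuleCat.restrictScalars.{u} φ) (𝟭 _) :=
  Adjunction.mkOfHomEquiv
    { homEquiv _ _ :=
        { toFun f := f.right
          invFun g :=
            { left := 0
              right := g
              w := (((ModuleCat.restrictScalars φ).map_isZero (isZero_of_punit S)).eq_of_src _ _) }
          left_inv _ := ofRight_hom_eq φ rfl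
          right_inv _ := rfl }
      homEquiv_naturality_left_symm _ _ := ofRight_hom_eq φ rfl
      homEquiv_naturality_right _ _ := rfl }

/-- `N ↦ (N, N, id)` is left adjoint to `(N, M, f) ↦ N`. -/
noncomputable def diagAdj : diag φ ⊣ Comma.fst (ModuleCat.restrictScalars.{u} φ) (𝟭 _) :=
  Adjunction.mkOfHomEquiv
    { homEquiv N L :=
        { toFun f := f.left
          invFun g :=
            { left := g
              right := (ModuleCat.restrictScalars φ).map g ≫ L.hom
              w := by simp [diag] }
          left_inv f := Comma.hom_ext _ _ rfl (by simpa [diag] using f.w)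
          right_inv _ := rfl }
      homEquiv_naturality_left_symm _ _ :=
        Comma.hom_ext _ _ rfl (by
          change (ModuleCat.restrictScalars φ).map (_ ≫ _) ≫ _ = _ ≫ _ ≫ _
          rw [Functor.map_comp, Category.assoc]
          rfl)
      homEquiv_naturality_right _ _ := rfl }

instance : (Comma.fst (ModuleCat.restrictScalars.{u} φ) (𝟭 (ModuleCat.{u} R))).IsRightAdjoint :=
  (diagAdj φ).isRightAdjoint

instance : (Comma.snd (ModuleCat.restrictScalars.{u} φ) (𝟭 (ModuleCat.{u} R))).IsRightAdjoint :=
  (ofRightAdj φ).isRightAdjoint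

instance : (ofRight φ).IsLeftAdjoint := (ofRightAdj φ).isLeftAdjoint

instance : PreservesColimitsOfSize.{0, 0} (Comma.fst (ModuleCat.restrictScalars.{u} φ)
    (𝟭 (ModuleCat.{u} R))) where
  preservesColimitsOfShape := inferInstance

instance : PreservesFiniteColimits (Comma.snd (ModuleCat.restrictScalars.{u} φ)
    (𝟭 (ModuleCat.{u} R))) where
  preservesFiniteColimits _ := inferInstance

section

variable [Abelian (TripleCat φ)]

-- `Comma` also carries a componentwise preadditive structure; `Ext` uses the one of `Abelian`.
local instance : Preadditive (TripleCat φ) := Abelian.toPreadditive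

instance : (Comma.fst (ModuleCat.restrictScalars.{u} φ) (𝟭 (ModuleCat.{u} R))).Additive :=
  Functor.additive_of_preserves_binary_products _

instance : (Comma.snd (ModuleCat.restrictScalars.{u} φ) (𝟭 (ModuleCat.{u} R))).Additive :=
  Functor.additive_of_preserves_binary_products _

instance : (ofRight φ).Additive := (ofRightAdj φ).left_adjoint_additive

end

lemma mono_of_mono_components {L L' : TripleCat φ} (f : L ⟶ L') [Mono f.left] [Mono f.right] :
    Mono f where
  right_cancellation _ _ e := Comma.hom_ext _ _
    ((cancel_mono f.left).1 (congrArg CommaMorphism.left e))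
    ((cancel_mono f.right).1 (congrArg CommaMorphism.right e))

lemma epi_of_epi_components {L L' : TripleCat φ} (f : L ⟶ L') [Epi f.left] [Epi f.right] :
    Epi f where
  left_cancellation _ _ e := Comma.hom_ext _ _
    ((cancel_epi f.left).1 (congrArg CommaMorphism.left e))
    ((cancel_epi f.right).1 (congrArg CommaMorphism.right e))

instance : (ofRight φ).PreservesMonomorphisms where
  preserves f _ :=
    have : Mono ((ofRight φ).map f).left := inferInstanceAs (Mono (𝟙 _))
    have : Mono ((ofRight φ).map f).right := ‹Mono f›
    mono_of_mono_components φ _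

/-- The inclusion `(0, S, 0) ⟶ (S, S, id)`. -/
noncomputable def ofRightToDiag :
    (ofRight φ).obj ((ModuleCat.restrictScalars φ).obj (ModuleCat.of S S)) ⟶
      (diag φ).obj (ModuleCat.of S S) :=
  ((ofRightAdj φ).homEquiv _ _).symm (𝟙 _)

/-- The projection `(S, S, id) ⟶ (S, 0, 0)`. -/
noncomputable def diagToEobj : (diag φ).obj (ModuleCat.of S S) ⟶ Eobj φ :=
  ((diagAdj φ).homEquiv _ _).symm (𝟙 _)

section

variable [Abelian (TripleCat φ)]

local instance : Preadditive (TripleCat φ) := Abelian.toPreadditive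

/-- The sequence `(0, S, 0) ⟶ (S, S, id) ⟶ E`. -/
noncomputable def resolutionOfEobj : ShortComplex (TripleCat φ) :=
  ShortComplex.mk (ofRightToDiag φ) (diagToEobj φ)
    (ofRight_hom_eq φ ((isZero_of_punit R).eq_of_tgt _ _))

lemma resolutionOfEobj_shortExact : (resolutionOfEobj φ).ShortExact := by
  have : Mono (ofRightToDiag φ).left := ⟨fun _ _ _ ↦ (isZero_of_punit S).eq_of_tgt _ _⟩
  have : Mono (ofRightToDiag φ).right := inferInstanceAs (Mono (𝟙 _))
  have : Epi (diagToEobj φ).left := inferInstanceAs (Epi (𝟙 _))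
  have : Epi (diagToEobj φ).right := ⟨fun _ _ _ ↦ (isZero_of_punit R).eq_of_src _ _⟩
  have hf : Mono (ofRightToDiag φ) := mono_of_mono_components φ _
  have hg : Epi (diagToEobj φ) := epi_of_epi_components φ _
  refine { exact := ShortComplex.exact_of_f_is_kernel _ ?_, mono_f := hf, epi_g := hg }
  have : Mono (resolutionOfEobj φ).f := hf
  refine KernelFork.IsLimit.ofι' _ _ fun {A} k hk ↦ ?_
  have hl : k.left = 0 :=
    (congrArg CommaMorphism.left hk).trans
      ((Comma.fst (ModuleCat.restrictScalars φ) (𝟭 _)).map_zero A (Eobj φ))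
  have hw := k.w
  rw [hl] at hw
  refine ⟨{ left := 0, right := k.right, w := ?_ },
    Comma.hom_ext _ _ (Eq.trans ?_ hl.symm) (Category.comp_id k.right)⟩
  · exact hw
  · exact Limits.zero_comp

variable [HasExt.{u} (TripleCat φ)] [HasExt.{u} (ModuleCat.{u} R)]

/-- The isomorphism between `Ext` groups from `E` and `Ext` groups from `S` over `R`, obtained from
the connecting homomorphism and the adjunction `ofRightAdj`. -/
noncomputable def extEobjAddEquiv (L : TripleCat φ) (n : ℕ) :
    Abelian.Ext (Eobj φ) L (n + 2) ≃+
      Abelian.Ext ((ModuleCat.restrictScalars φ).obj (ModuleCat.of S S)) L.right (n + 1) :=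
  have : Projective (ModuleCat.of S S) := inferInstance
  have : Projective (resolutionOfEobj φ).X₂ := (diagAdj φ).map_projective _ this
  ((resolutionOfEobj_shortExact φ).extAddEquivOfProjective L n).symm.trans
    (AddEquiv.ofBijective _ ((ofRightAdj φ).extAddHom_bijective _ L (n + 1)))

end

end TripleCat

/-- For `L = (N, M, f)` in `A` and `E = (S, 0, 0)`, one has
`Ext^i_A(E, L) ≅ Ext^{i-1}_R(S, M)` for all `i ≥ 2`, where `S` is viewed as a left
`R`-module via the ring homomorphism `φ : R → S`. -/
theorem ext_from_E_higher [Abelian (TripleCat φ)] [CategoryTheory.HasExt.{u} (TripleCat φ)]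
    [CategoryTheory.HasExt.{u} (ModuleCat.{u} R)] (L : TripleCat φ) :
    ∀ i : ℕ, 2 ≤ i →
      Nonempty (CategoryTheory.Abelian.Ext (Eobj φ) L i ≃+
        CategoryTheory.Abelian.Ext
          ((ModuleCat.restrictScalars φ).obj (ModuleCat.of S S)) L.right (i - 1)) := by
  intro i hi
  obtain ⟨n, rfl⟩ := Nat.exists_eq_add_of_le' hi
  exact ⟨TripleCat.extEobjAddEquiv φ L n⟩
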